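/- arXiv:1604.03689 — 8 statements merged into one kernel-verified Lean document; each statement's English description precedes it below -/
import Mathlib

section
/- Let η > 2, c > 0 and r₀ > 0 be real numbers. Then 2∫_{r₀}^∞ (1 − exp(−c r^{−η})) r dr = c^{2/η} γ(1 − 2/η, c r₀^{−η}) − r₀² (1 − exp(−c r₀^{−η})). -/
open MeasureTheory Real

/-!
The function `F r = r² (1 - exp (-c r^(-η))) - c^(2/η) γ(1 - 2/η, c r^(-η))` is an antiderivative of
`2 r (1 - exp (-c r^(-η)))` on `(0, ∞)`: with `y = c r^(-η)` one has `c^(2/η) y^(-2/η) = r²`, so the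
two terms containing `y'` cancel. Since `1 - exp (-y) ≤ y` and `η > 2`, and since `γ(a, ·)` is
continuous with `γ(a, 0) = 0` for `a > 0`, `F` tends to `0` at infinity. The integrand is
nonnegative, so the fundamental theorem of calculus on `(r₀, ∞)` applies with no separate
integrability argument and gives the value `-F r₀`.
-/

/-- Lower incomplete gamma function `γ(a, x) = ∫_0^x t^(a-1) e^(-t) dt`. -/
noncomputable def lowerIncGamma (a x : ℝ) : ℝ :=
  ∫ t in (0:ℝ)..x, t ^ (a - 1) * Real.exp (-t)

lemma intervalIntegrable_gammaIntegrand {a : ℝ} (ha : 0 < a) (x y : ℝ) :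
    IntervalIntegrable (fun t : ℝ => t ^ (a - 1) * Real.exp (-t)) volume x y :=
  (intervalIntegral.intervalIntegrable_rpow' (by linarith)).mul_continuousOn
    (by fun_prop)

lemma continuous_lowerIncGamma {a : ℝ} (ha : 0 < a) : Continuous (lowerIncGamma a) :=
  intervalIntegral.continuous_primitive (intervalIntegrable_gammaIntegrand ha) 0

lemma hasDerivAt_lowerIncGamma {a x : ℝ} (ha : 0 < a) (hx : 0 < x) :
    HasDerivAt (lowerIncGamma a) (x ^ (a - 1) * Real.exp (-x)) x := by
  have hm : Measurable (fun t : ℝ => t ^ (a - 1) * Real.exp (-t)) := by fun_prop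
  refine intervalIntegral.integral_hasDerivAt_right (intervalIntegrable_gammaIntegrand ha 0 x)
    hm.stronglyMeasurable.stronglyMeasurableAtFilter ?_
  exact (Real.continuousAt_rpow_const x _ (Or.inl hx.ne')).mul (by fun_prop)

/-- An antiderivative of `2 r (1 - exp (-c r^(-η)))` on the positive half-line. -/
noncomputable def interferencePrimitive (η c r : ℝ) : ℝ :=
  r ^ 2 * (1 - Real.exp (-c * r ^ (-η))) - c ^ (2 / η) * lowerIncGamma (1 - 2 / η) (c * r ^ (-η))

lemma hasDerivAt_interferencePrimitive {η c r : ℝ} (hη : 2 < η) (hc : 0 < c) (hr : 0 < r) :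
    HasDerivAt (interferencePrimitive η c) (2 * ((1 - Real.exp (-c * r ^ (-η))) * r)) r := by
  have ha : 0 < 1 - 2 / η := by
    rw [sub_pos, div_lt_one (by linarith)]; exact hη
  have hp : HasDerivAt (fun r : ℝ => r ^ (-η)) (-η * r ^ (-η - 1)) r :=
    Real.hasDerivAt_rpow_const (Or.inl hr.ne')
  have hγ := ((hasDerivAt_lowerIncGamma ha (x := c * r ^ (-η)) (by positivity)).comp r
    (hp.const_mul c)).const_mul (c ^ (2 / η))
  have h1 := (hasDerivAt_pow 2 r).mul ((hp.const_mul (-c)).exp.const_sub 1)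
  refine (h1.sub hγ).congr_deriv ?_
  have key : c ^ (2 / η) * (c * r ^ (-η)) ^ (1 - 2 / η - 1) = r ^ 2 := by
    rw [Real.mul_rpow hc.le (by positivity), ← Real.rpow_mul hr.le, ← mul_assoc,
      ← Real.rpow_add hc, show 2 / η + (1 - 2 / η - 1) = 0 by ring,
      show -η * (1 - 2 / η - 1) = (2 : ℕ) by field_simp; norm_num, Real.rpow_zero, one_mul,
      Real.rpow_natCast]
  rw [← key, neg_mul]
  push_cast
  ring

lemma tendsto_interferencePrimitive {η c : ℝ} (hη : 2 < η) (hc : 0 < c) :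
    Filter.Tendsto (interferencePrimitive η c) Filter.atTop (nhds 0) := by
  have ha : 0 < 1 - 2 / η := by
    rw [sub_pos, div_lt_one (by linarith)]; exact hη
  have hy : Filter.Tendsto (fun r : ℝ => c * r ^ (-η)) Filter.atTop (nhds 0) := by
    simpa using (tendsto_rpow_neg_atTop (show 0 < η by linarith)).const_mul c
  have hγ : Filter.Tendsto
      (fun r : ℝ => c ^ (2 / η) * lowerIncGamma (1 - 2 / η) (c * r ^ (-η)))
      Filter.atTop (nhds 0) := by
    simpa [lowerIncGamma] using
      (((continuous_lowerIncGamma ha).tendsto 0).comp hy).const_mul (c ^ (2 / η))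
  have hb : Filter.Tendsto (fun r : ℝ => c * r ^ (-(η - 2))) Filter.atTop (nhds 0) := by
    simpa using (tendsto_rpow_neg_atTop (show 0 < η - 2 by linarith)).const_mul c
  have h1 : Filter.Tendsto (fun r : ℝ => r ^ 2 * (1 - Real.exp (-c * r ^ (-η))))
      Filter.atTop (nhds 0) := by
    refine squeeze_zero' ?_ ?_ hb
    · filter_upwards [Filter.eventually_gt_atTop 0] with r hr
      have : 0 < c * r ^ (-η) := by positivity
      have : Real.exp (-c * r ^ (-η)) ≤ 1 := Real.exp_le_one_iff.2 (by linarith)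
      exact mul_nonneg (sq_nonneg r) (by linarith)
    · filter_upwards [Filter.eventually_gt_atTop 0] with r hr
      have h2 : r ^ (-(η - 2)) = r ^ 2 * r ^ (-η) := by
        rw [show -(η - 2) = (2 : ℕ) + -η by push_cast; ring, Real.rpow_add hr, Real.rpow_natCast]
      have h3 := Real.add_one_le_exp (-c * r ^ (-η))
      calc r ^ 2 * (1 - Real.exp (-c * r ^ (-η))) ≤ r ^ 2 * (c * r ^ (-η)) := by
            gcongr; linarith
        _ = c * r ^ (-(η - 2)) := by rw [h2]; ring
  have h := h1.sub hγ
  rw [sub_zero] at h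
  exact h

/-- For `η > 2`, `c > 0`, `r₀ > 0`,
`2∫_{r₀}^∞ (1 − exp(−c r^{−η})) r dr
  = c^{2/η} γ(1 − 2/η, c r₀^{−η}) − r₀² (1 − exp(−c r₀^{−η}))`. -/
theorem stmt0 (η c r₀ : ℝ) (hη : 2 < η) (hc : 0 < c) (hr₀ : 0 < r₀) :
    2 * ∫ r in Set.Ioi r₀, (1 - Real.exp (-c * r ^ (-η))) * r =
      c ^ (2 / η) * lowerIncGamma (1 - 2 / η) (c * r₀ ^ (-η))
        - r₀ ^ 2 * (1 - Real.exp (-c * r₀ ^ (-η))) := by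
  rw [← integral_const_mul, integral_Ioi_of_hasDerivAt_of_nonneg'
    (fun r hr => hasDerivAt_interferencePrimitive hη hc (hr₀.trans_le hr)) ?_
    (tendsto_interferencePrimitive hη hc)]
  · simp only [interferencePrimitive]
    ring
  · intro r hr
    have hr' : 0 < r := hr₀.trans hr
    have : 0 < c * r ^ (-η) := by positivity
    have : Real.exp (-c * r ^ (-η)) ≤ 1 := Real.exp_le_one_iff.2 (by linarith)
    exact mul_nonneg zero_le_two (mul_nonneg (by linarith) hr'.le)
end

section
/- Let η > 2 be real. For every real x ≥ 0, (1 − e^{−x}) − x^{2/η} γ(1 − 2/η, x) = 2 ∑_{k=1}^∞ (−1)^k x^k / ((η k − 2) k!), where the series on the right converges absolutely. -/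
/-!
Write `s = 2 / η ∈ (0, 1)`. Expanding `e^{-t}` and integrating term by term against the integrable
weight `t^{-s}` (dominated convergence) gives
`x^s γ(1 - s, x) = ∑_{j ≥ 0} (-1)^j x^{j+1} / (j! (j + 1 - s))`. Subtracting this from the series
`1 - e^{-x} = -∑_{k ≥ 1} (-x)^k / k!` and putting `k = j + 1`, the coefficient of `(-x)^k / k!` is
`k / (k - s) - 1 = s / (k - s) = 2 / (η k - 2)`.
-/

open MeasureTheory Real

/-- Term-by-term integration of the exponential series in `γ(1 - s, x)`, multiplied by `x ^ s`. -/
lemma hasSum_rpow_mul_lowerIncGamma {s x : ℝ} (hs : s < 1) (hx : 0 ≤ x) :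
    HasSum (fun j : ℕ => (-1 : ℝ) ^ j * x ^ (j + 1) / (Nat.factorial j * (j + 1 - s)))
      (x ^ s * lowerIncGamma (1 - s) x) := by
  have hint : IntervalIntegrable (fun t : ℝ => t ^ (-s)) volume 0 x :=
    intervalIntegral.intervalIntegrable_rpow' (by linarith)
  have key : HasSum (fun j : ℕ => ∫ t in (0:ℝ)..x, t ^ (-s) * ((-t) ^ j / Nat.factorial j))
      (∫ t in (0:ℝ)..x, t ^ (-s) * Real.exp (-t)) := by
    refine intervalIntegral.hasSum_integral_of_dominated_convergence
      (fun j t => t ^ (-s) * (x ^ j / Nat.factorial j)) ?_ ?_ ?_ ?_ ?_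
    · intro j
      exact (by fun_prop : Measurable fun t : ℝ =>
        t ^ (-s) * ((-t) ^ j / Nat.factorial j)).aestronglyMeasurable
    · intro j
      refine Filter.Eventually.of_forall fun t ht => ?_
      rw [Set.uIoc_of_le hx] at ht
      have h0 : 0 ≤ t := ht.1.le
      rw [norm_mul, norm_div, norm_pow, norm_neg, Real.norm_of_nonneg h0,
        Real.norm_of_nonneg (Real.rpow_nonneg h0 _), Real.norm_of_nonneg (Nat.cast_nonneg _)]
      have := ht.2
      gcongr
    · exact Filter.Eventually.of_forall fun t _ =>
        (Real.summable_pow_div_factorial x).mul_left _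
    · simp_rw [tsum_mul_left]
      exact hint.mul_const _
    · refine Filter.Eventually.of_forall fun t _ => ?_
      rw [Real.exp_eq_exp_ℝ]
      exact (NormedSpace.expSeries_div_hasSum_exp (-t)).mul_left _
  have hγ : lowerIncGamma (1 - s) x = ∫ t in (0:ℝ)..x, t ^ (-s) * Real.exp (-t) := by
    rw [lowerIncGamma, show 1 - s - 1 = -s by ring]
  rw [hγ]
  refine HasSum.congr_fun (key.mul_left (x ^ s)) fun j => ?_
  have hj : (0:ℝ) < j + 1 - s := by
    have : (0:ℝ) ≤ j := Nat.cast_nonneg j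
    linarith
  have h1 : ∫ t in (0:ℝ)..x, t ^ (-s) * ((-t) ^ j / Nat.factorial j)
      = ∫ t in (0:ℝ)..x, ((-1) ^ j / Nat.factorial j) * t ^ ((j:ℝ) - s) := by
    -- The integrands may differ at `t = 0`, which lies outside the half-open interval `(0, x]`.
    refine intervalIntegral.integral_congr_ae (Filter.Eventually.of_forall fun t ht => ?_)
    rw [Set.uIoc_of_le hx] at ht
    rw [sub_eq_neg_add, Real.rpow_add ht.1, Real.rpow_natCast, neg_pow]
    ring
  have h2 : x ^ s * x ^ ((j:ℝ) - s + 1) = x ^ (j + 1) := by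
    rw [← Real.rpow_add' hx (by ring_nf; positivity), ← Real.rpow_natCast]
    congr 1
    push_cast
    ring
  rw [h1, intervalIntegral.integral_const_mul, integral_rpow (Or.inl (by linarith)),
    Real.zero_rpow (by linarith), sub_zero, ← h2, show (j:ℝ) - s + 1 = j + 1 - s by ring]
  field_simp

/-- For `η > 2` and `x ≥ 0`,
`(1 − e^{−x}) − x^{2/η} γ(1 − 2/η, x) = 2 ∑_{k=1}^∞ (−1)^k x^k / ((η k − 2) k!)`,
the series converging absolutely. -/
theorem stmt1 (η x : ℝ) (hη : 2 < η) (hx : 0 ≤ x) :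
    Summable (fun k : ℕ =>
      |(-1 : ℝ) ^ (k + 1) * x ^ (k + 1) / ((η * (k + 1) - 2) * (Nat.factorial (k + 1)))|) ∧
    (1 - Real.exp (-x)) - x ^ (2 / η) * lowerIncGamma (1 - 2 / η) x =
      2 * ∑' k : ℕ,
        (-1 : ℝ) ^ (k + 1) * x ^ (k + 1) / ((η * (k + 1) - 2) * (Nat.factorial (k + 1))) := by
  have hs : 2 / η < 1 := by rw [div_lt_one (by linarith)]; exact hη
  have hexp : HasSum (fun k : ℕ => (-x) ^ (k + 1) / (Nat.factorial (k + 1) : ℝ))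
      (Real.exp (-x) - 1) := by
    have h := NormedSpace.expSeries_div_hasSum_exp (-x)
    rw [← Real.exp_eq_exp_ℝ, ← hasSum_nat_add_iff' 1] at h
    simpa using h
  have hsum := ((hexp.add (hasSum_rpow_mul_lowerIncGamma hs hx)).neg).div_const 2
  have hterm : ∀ k : ℕ,
      -((-x) ^ (k + 1) / (Nat.factorial (k + 1) : ℝ) +
        (-1 : ℝ) ^ k * x ^ (k + 1) / (Nat.factorial k * (k + 1 - 2 / η))) / 2 =
      (-1 : ℝ) ^ (k + 1) * x ^ (k + 1) / ((η * (k + 1) - 2) * (Nat.factorial (k + 1))) := by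
    intro k
    have hk : (0:ℝ) ≤ k := Nat.cast_nonneg k
    have hη0 : η ≠ 0 := by linarith
    have hd : η * (k + 1) - 2 ≠ 0 := by nlinarith
    have hk1 : (k:ℝ) + 1 ≠ 0 := by linarith
    have hf : (Nat.factorial k : ℝ) ≠ 0 := by positivity
    rw [show (k:ℝ) + 1 - 2 / η = (η * (k + 1) - 2) / η by field_simp, neg_pow x,
      Nat.factorial_succ, pow_succ (-1 : ℝ)]
    push_cast
    generalize hD : η * ((k:ℝ) + 1) - 2 = D at hd ⊢
    field_simp
    linear_combination -(x ^ (k + 1)) * hD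
  simp only [hterm] at hsum
  refine ⟨hsum.summable.abs, ?_⟩
  rw [hsum.tsum_eq]
  ring
end

section
/- Let η > 2, r₀ > 0 and 0 ≤ c < r₀^η be real. Then 2 ∫_{r₀}^∞ c r / (r^η + c) dr = 2 r₀² ∑_{n=1}^∞ (−1)^{n+1} (c / r₀^η)^n / (η n − 2), where the series converges absolutely. (Equivalently, the left-hand side equals (2 c r₀^{2−η}/(η−2)) · ₂F₁(1, 1 − 2/η; 2 − 2/η; −c r₀^{−η}).) -/
open MeasureTheory Real

/-!
For `r > r₀` one has `0 ≤ c r^{-η} < 1`, so the geometric series gives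
`c r / (r^η + c) = ∑ₙ (-1)ⁿ c^{n+1} r^{1 - η (n+1)}`. Each term is integrable on `(r₀, ∞)` because
`η > 2`, with integral `r₀² (-1)ⁿ (c / r₀^η)^{n+1} / (η (n+1) - 2)`. These integrals are absolutely
summable by comparison with a geometric series of ratio `c / r₀^η < 1`, and this justifies
exchanging sum and integral.
-/

/-- The integral of the `n`-th term of the geometric expansion, without its sign `(-1)ⁿ`; for
`c ≥ 0` this is also the integral of the absolute value of that term. -/
lemma integral_expansion_term (η c r₀ : ℝ) (hη : 2 < η) (hr₀ : 0 < r₀) (n : ℕ) :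
    ∫ r in Set.Ioi r₀, c ^ (n + 1) * r ^ (1 - η * (n + 1)) =
      r₀ ^ 2 * ((c / r₀ ^ η) ^ (n + 1) / (η * (n + 1) - 2)) := by
  have hn : (0 : ℝ) ≤ n := n.cast_nonneg
  have hd : 0 < η * (n + 1) - 2 := by nlinarith
  rw [integral_const_mul, integral_Ioi_rpow_of_lt (by linarith) hr₀]
  have hpow : r₀ ^ (1 - η * (n + 1) + 1) = r₀ ^ 2 / (r₀ ^ η) ^ (n + 1) := by
    rw [show 1 - η * (n + 1) + 1 = 2 - η * ((n + 1 : ℕ) : ℝ) by push_cast; ring,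
      rpow_sub hr₀, rpow_mul hr₀.le, rpow_natCast, rpow_two]
  have hp : r₀ ^ η ≠ 0 := (rpow_pos_of_pos hr₀ η).ne'
  rw [hpow, div_pow, show 1 - η * (n + 1) + 1 = -(η * (n + 1) - 2) by ring]
  field_simp

lemma hasSum_expansion (η c r₀ r : ℝ) (hη : 2 < η) (hr₀ : 0 < r₀) (hc : 0 ≤ c)
    (hcr : c < r₀ ^ η) (hr : r₀ < r) :
    HasSum (fun n : ℕ => (-1 : ℝ) ^ n * (c ^ (n + 1) * r ^ (1 - η * (n + 1))))
      (c * r / (r ^ η + c)) := by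
  have hr0 : 0 < r := hr₀.trans hr
  have hp : 0 < r ^ η := rpow_pos_of_pos hr0 η
  have hlt : c < r ^ η := hcr.trans (rpow_lt_rpow hr₀.le hr (by linarith))
  have hgeo : HasSum (fun n : ℕ => (-(c / r ^ η)) ^ n) (1 - -(c / r ^ η))⁻¹ := by
    apply hasSum_geometric_of_abs_lt_one
    rwa [abs_neg, abs_of_nonneg (by positivity), div_lt_one hp]
  have hterm : (fun n : ℕ => (-1 : ℝ) ^ n * (c ^ (n + 1) * r ^ (1 - η * (n + 1)))) =
      fun n : ℕ => c * r / r ^ η * (-(c / r ^ η)) ^ n := by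
    funext n
    rw [show 1 - η * ((n : ℝ) + 1) = 1 - η * ((n + 1 : ℕ) : ℝ) by push_cast; ring,
      rpow_sub hr0, rpow_mul hr0.le, rpow_natCast, rpow_one, neg_pow (c / r ^ η), div_pow]
    field_simp
    ring
  have hval : c * r / (r ^ η + c) = c * r / r ^ η * (1 - -(c / r ^ η))⁻¹ := by
    have : r ^ η + c ≠ 0 := by positivity
    rw [sub_neg_eq_add]
    field_simp
  rw [hterm, hval]
  exact hgeo.mul_left _

lemma summable_series (η q : ℝ) (hη : 2 < η) (hq : 0 ≤ q) (hq1 : q < 1) :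
    Summable (fun n : ℕ => q ^ (n + 1) / (η * (n + 1) - 2)) := by
  have hd (n : ℕ) : η - 2 ≤ η * (n + 1) - 2 := by
    have hn : (0 : ℝ) ≤ n := n.cast_nonneg
    nlinarith
  have hη' : 0 < η - 2 := by linarith
  refine Summable.of_nonneg_of_le (fun n => ?_) (fun n => ?_)
    (((summable_nat_add_iff 1).2 (summable_geometric_of_lt_one hq hq1)).div_const (η - 2))
  · exact div_nonneg (by positivity) (hη'.le.trans (hd n))
  · exact div_le_div_of_nonneg_left (by positivity) hη' (hd n)

/-- For `η > 2`, `r₀ > 0` and `0 ≤ c < r₀^η`,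
`2 ∫_{r₀}^∞ c r / (r^η + c) dr = 2 r₀² ∑_{n=1}^∞ (−1)^{n+1} (c / r₀^η)^n / (η n − 2)`,
the series converging absolutely. -/
theorem stmt4 (η c r₀ : ℝ) (hη : 2 < η) (hr₀ : 0 < r₀) (hc : 0 ≤ c)
    (hcr : c < r₀ ^ η) :
    Summable (fun n : ℕ =>
      |(-1 : ℝ) ^ ((n + 1) + 1) * (c / r₀ ^ η) ^ (n + 1) / (η * (n + 1) - 2)|) ∧
    2 * ∫ r in Set.Ioi r₀, c * r / (r ^ η + c) =
      2 * r₀ ^ 2 * ∑' n : ℕ,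
        (-1 : ℝ) ^ ((n + 1) + 1) * (c / r₀ ^ η) ^ (n + 1) / (η * (n + 1) - 2) := by
  have hp : 0 < r₀ ^ η := rpow_pos_of_pos hr₀ η
  have hsum := summable_series η (c / r₀ ^ η) hη (by positivity) ((div_lt_one hp).2 hcr)
  have hd (n : ℕ) : 0 < η * (n + 1) - 2 := by
    have hn : (0 : ℝ) ≤ n := n.cast_nonneg
    nlinarith
  refine ⟨?_, ?_⟩
  · refine hsum.congr fun n => ?_
    rw [abs_div, abs_mul, abs_pow, abs_neg, abs_one, one_pow, one_mul, abs_of_pos (hd n),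
      abs_of_nonneg (by positivity)]
  · have hint (n : ℕ) : Integrable
        (fun r : ℝ => (-1 : ℝ) ^ n * (c ^ (n + 1) * r ^ (1 - η * (n + 1))))
        (volume.restrict (Set.Ioi r₀)) :=
      ((integrableOn_Ioi_rpow_of_lt (by linarith [hd n]) hr₀).const_mul _).const_mul _
    have hnorm (n : ℕ) :
        ∫ r in Set.Ioi r₀, ‖(-1 : ℝ) ^ n * (c ^ (n + 1) * r ^ (1 - η * (n + 1)))‖ =
          r₀ ^ 2 * ((c / r₀ ^ η) ^ (n + 1) / (η * (n + 1) - 2)) := by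
      rw [← integral_expansion_term η c r₀ hη hr₀ n]
      refine setIntegral_congr_fun measurableSet_Ioi fun r hr => ?_
      have hr0 : 0 < r := hr₀.trans hr
      simp only [norm_mul, norm_pow, norm_neg, norm_one, one_pow, one_mul, Real.norm_eq_abs]
      rw [abs_of_nonneg hc, abs_of_nonneg (by positivity)]
    have hswap := hasSum_integral_of_summable_integral_norm hint
      ((hsum.mul_left (r₀ ^ 2)).congr fun n => (hnorm n).symm)
    rw [mul_assoc, ← tsum_mul_left]
    congr 1
    rw [setIntegral_congr_fun measurableSet_Ioi fun r hr =>
      (hasSum_expansion η c r₀ r hη hr₀ hc hcr hr).tsum_eq.symm, ← hswap.tsum_eq]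
    refine tsum_congr fun n => ?_
    rw [integral_const_mul, integral_expansion_term η c r₀ hη hr₀ n]
    ring
end

section
/- Let η > 2 be real, m ≥ 1 an integer, r₀ > 0 and 0 ≤ c < r₀^η real. Then 2 ∫_{r₀}^∞ (1 − (1 + c r^{−η})^{−m}) r dr = 2 r₀² ∑_{n=1}^∞ (−1)^{n+1} (m)_n (c / r₀^η)^n / (n! (η n − 2)), where (m)_n = m(m+1)⋯(m+n−1) is the Pochhammer symbol and the series converges absolutely. (Equivalently, the left-hand side equals r₀² (₂F₁(−2/η, m; 1 − 2/η; −c r₀^{−η}) − 1).) -/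
open MeasureTheory Real

/-!
Put `m = k + 1`. Since `(m)_n / n! = (n + k).choose k`, the negative binomial series at
`x = c r^{-η} ∈ [0, 1)` gives
`1 - (1 + x)^{-m} = ∑_{n ≥ 1} (-1)^{n+1} (m)_n / n! * x^n`.
Multiplying by `r` and integrating over `(r₀, ∞)` termwise, each power `r^{1 - η n}` contributes
`r₀^{2 - η n} / (η n - 2)`. The interchange is justified by the summability of the integrals of the
absolute values of the terms; these are `r₀²` times the absolute values of the terms of the target
series, and are dominated by the negative binomial series at `c / r₀^η < 1`.
-/

/-- The ratio `(k+1)_n / n!` is the binomial coefficient of the negative binomial series. -/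
lemma ascPochhammer_eval_succ_eq_factorial_mul_choose (k n : ℕ) :
    (ascPochhammer ℝ n).eval ((k + 1 : ℕ) : ℝ) = (n.factorial : ℝ) * ((n + k).choose k : ℝ) := by
  rw [← ascPochhammer_eval_cast, ascPochhammer_nat_eq_ascFactorial,
    Nat.ascFactorial_eq_factorial_mul_choose, Nat.cast_mul, add_comm k n, Nat.choose_symm_add]

/-- The negative binomial series with its constant term removed. -/
lemma hasSum_one_sub_inv_one_add_pow (k : ℕ) {x : ℝ} (hx0 : 0 ≤ x) (hx1 : x < 1) :
    HasSum (fun n : ℕ => (-1 : ℝ) ^ n * ((n + 1 + k).choose k : ℝ) * x ^ (n + 1))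
      (1 - ((1 + x) ^ (k + 1))⁻¹) := by
  have h := hasSum_choose_mul_geometric_of_norm_lt_one k (r := -x)
    (by rwa [norm_neg, Real.norm_of_nonneg hx0])
  have h1 := ((hasSum_nat_add_iff' 1).mpr h).neg
  have hval : -(1 / (1 - -x) ^ (k + 1)
      - ∑ i ∈ Finset.range 1, ((i + k).choose k : ℝ) * (-x) ^ i) = 1 - ((1 + x) ^ (k + 1))⁻¹ := by
    simp
  rw [hval] at h1
  refine h1.congr_fun fun n => ?_
  rw [neg_pow x (n + 1)]
  ring

lemma summable_choose_mul_pow (k : ℕ) {x : ℝ} (hx0 : 0 ≤ x) (hx1 : x < 1) :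
    Summable (fun n : ℕ => ((n + 1 + k).choose k : ℝ) * x ^ (n + 1)) :=
  (summable_nat_add_iff 1).mpr (summable_choose_mul_geometric_of_norm_lt_one k (r := x)
    (by rwa [Real.norm_of_nonneg hx0]))

/-- The integral of a single term of the expanded integrand. -/
lemma integral_Ioi_term (η c r₀ : ℝ) (n : ℕ) (hη : 2 < η) (hr₀ : 0 < r₀) :
    IntegrableOn (fun r : ℝ => c ^ (n + 1) * r ^ (1 - η * (n + 1))) (Set.Ioi r₀) ∧
    ∫ r in Set.Ioi r₀, c ^ (n + 1) * r ^ (1 - η * (n + 1)) =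
      r₀ ^ 2 * ((c / r₀ ^ η) ^ (n + 1) / (η * (n + 1) - 2)) := by
  have hn : (0 : ℝ) ≤ n := n.cast_nonneg
  have hlt : 1 - η * (n + 1) < -1 := by nlinarith
  refine ⟨(integrableOn_Ioi_rpow_of_lt hlt hr₀).const_mul _, ?_⟩
  have hpow : r₀ ^ (1 - η * (n + 1) + 1) = r₀ ^ 2 / (r₀ ^ η) ^ (n + 1) := by
    rw [show 1 - η * (n + 1) + 1 = 2 - η * ((n + 1 : ℕ) : ℝ) by push_cast; ring,
      Real.rpow_sub hr₀, Real.rpow_mul hr₀.le, Real.rpow_natCast, Real.rpow_two]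
  rw [integral_const_mul, integral_Ioi_rpow_of_lt hlt hr₀, hpow, div_pow]
  have h1 : η * (n + 1) - 2 ≠ 0 := by nlinarith
  have h2 : 1 - η * (n + 1) + 1 ≠ 0 := by nlinarith
  have h3 : (r₀ ^ η) ^ (n + 1) ≠ 0 := by positivity
  rw [show 1 - η * (n + 1) + 1 = -(η * (n + 1) - 2) by ring]
  field_simp

/-- For `η > 2`, an integer `m ≥ 1`, `r₀ > 0` and `0 ≤ c < r₀^η`,
`2 ∫_{r₀}^∞ (1 − (1 + c r^{−η})^{−m}) r dr
  = 2 r₀² ∑_{n=1}^∞ (−1)^{n+1} (m)_n (c / r₀^η)^n / (n! (η n − 2))`,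
where `(m)_n` is the (ascending) Pochhammer symbol and the series converges absolutely. -/
theorem stmt6 (η c r₀ : ℝ) (m : ℕ) (hm : 1 ≤ m) (hη : 2 < η) (hr₀ : 0 < r₀)
    (hc : 0 ≤ c) (hcr : c < r₀ ^ η) :
    Summable (fun n : ℕ =>
      |(-1 : ℝ) ^ ((n + 1) + 1) * (ascPochhammer ℝ (n + 1)).eval (m : ℝ)
          * (c / r₀ ^ η) ^ (n + 1)
        / ((Nat.factorial (n + 1)) * (η * (n + 1) - 2))|) ∧
    2 * ∫ r in Set.Ioi r₀, (1 - ((1 + c * r ^ (-η)) ^ m)⁻¹) * r =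
      2 * r₀ ^ 2 * ∑' n : ℕ,
        (-1 : ℝ) ^ ((n + 1) + 1) * (ascPochhammer ℝ (n + 1)).eval (m : ℝ)
            * (c / r₀ ^ η) ^ (n + 1)
          / ((Nat.factorial (n + 1)) * (η * (n + 1) - 2)) := by
  obtain ⟨k, rfl⟩ : ∃ k, m = k + 1 := ⟨m - 1, by omega⟩
  have hR : 0 < r₀ ^ η := Real.rpow_pos_of_pos hr₀ η
  have hx0 : 0 ≤ c / r₀ ^ η := div_nonneg hc hR.le
  have hx1 : c / r₀ ^ η < 1 := (div_lt_one hR).mpr hcr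
  have hden : ∀ n : ℕ, η - 2 ≤ η * (n + 1) - 2 := fun n => by
    have hn : (0 : ℝ) ≤ n := n.cast_nonneg
    nlinarith
  have hterm : ∀ n : ℕ,
      (-1 : ℝ) ^ ((n + 1) + 1) * (ascPochhammer ℝ (n + 1)).eval ((k + 1 : ℕ) : ℝ)
          * (c / r₀ ^ η) ^ (n + 1) / ((Nat.factorial (n + 1)) * (η * (n + 1) - 2)) =
        (-1 : ℝ) ^ n * ((n + 1 + k).choose k : ℝ)
          * ((c / r₀ ^ η) ^ (n + 1) / (η * (n + 1) - 2)) := fun n => by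
    rw [ascPochhammer_eval_succ_eq_factorial_mul_choose]
    have hf : ((n + 1).factorial : ℝ) ≠ 0 := by positivity
    have hd : η * (n + 1) - 2 ≠ 0 := by linarith [hden n]
    field_simp
    ring
  have hsum : Summable (fun n : ℕ =>
      ((n + 1 + k).choose k : ℝ) * ((c / r₀ ^ η) ^ (n + 1) / (η * (n + 1) - 2))) := by
    refine Summable.of_nonneg_of_le (fun n => ?_) (fun n => ?_)
      ((summable_choose_mul_pow k hx0 hx1).mul_right (η - 2)⁻¹)
    · have : 0 < η * (n + 1) - 2 := by linarith [hden n]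
      positivity
    · rw [div_eq_mul_inv, ← mul_assoc]
      have : (η * (n + 1) - 2)⁻¹ ≤ (η - 2)⁻¹ := inv_anti₀ (by linarith) (hden n)
      gcongr
  simp_rw [hterm]
  constructor
  · refine hsum.congr fun n => ?_
    have : 0 < η * (n + 1) - 2 := by linarith [hden n]
    rw [abs_mul, abs_mul, abs_pow, abs_neg, abs_one, one_pow, one_mul,
      abs_of_nonneg (by positivity), abs_of_nonneg (by positivity)]
  let F : ℕ → ℝ → ℝ := fun n r =>
    ((-1 : ℝ) ^ n * ((n + 1 + k).choose k : ℝ)) * (c ^ (n + 1) * r ^ (1 - η * (n + 1)))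
  have hFint : ∀ n, Integrable (F n) (volume.restrict (Set.Ioi r₀)) := fun n =>
    (integral_Ioi_term η c r₀ n hη hr₀).1.const_mul _
  have hFnorm : ∀ n, ∫ r in Set.Ioi r₀, ‖F n r‖ =
      r₀ ^ 2 * (((n + 1 + k).choose k : ℝ)
        * ((c / r₀ ^ η) ^ (n + 1) / (η * (n + 1) - 2))) := fun n => by
    rw [mul_left_comm, ← (integral_Ioi_term η c r₀ n hη hr₀).2, ← integral_const_mul]
    refine setIntegral_congr_fun measurableSet_Ioi fun r hr => ?_
    have hr' : 0 < r := hr₀.trans hr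
    have : 0 ≤ c ^ (n + 1) * r ^ (1 - η * (n + 1)) := by positivity
    simp only [F, norm_mul, norm_pow, norm_neg, norm_one, one_pow, one_mul]
    rw [← norm_pow, ← norm_mul, Real.norm_of_nonneg this, Real.norm_of_nonneg (by positivity)]
  have hswap := integral_tsum_of_summable_integral_norm hFint
    (by simp_rw [hFnorm]; exact hsum.mul_left _)
  have hpt : ∀ r ∈ Set.Ioi r₀,
      (1 - ((1 + c * r ^ (-η)) ^ (k + 1))⁻¹) * r = ∑' n, F n r := fun r hr => by
    have hr' : 0 < r := hr₀.trans hr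
    have hy1 : c * r ^ (-η) < 1 := by
      rw [Real.rpow_neg hr'.le, ← div_eq_mul_inv, div_lt_one (by positivity)]
      exact hcr.trans (Real.rpow_lt_rpow hr₀.le hr (by linarith))
    rw [← ((hasSum_one_sub_inv_one_add_pow k (by positivity) hy1).mul_right r).tsum_eq]
    refine tsum_congr fun n => ?_
    have hpow : r ^ (1 - η * (n + 1)) = (r ^ (-η)) ^ (n + 1) * r := by
      rw [show 1 - η * (n + 1) = -η * ((n + 1 : ℕ) : ℝ) + 1 by push_cast; ring,
        Real.rpow_add hr', Real.rpow_mul hr'.le, Real.rpow_natCast, Real.rpow_one]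
    simp only [F, hpow, mul_pow]
    ring
  rw [setIntegral_congr_fun measurableSet_Ioi hpt, ← hswap, mul_assoc]
  congr 1
  rw [← tsum_mul_left]
  refine tsum_congr fun n => ?_
  simp only [F]
  rw [integral_const_mul, (integral_Ioi_term η c r₀ n hη hr₀).2]
  ring
end

section
/- Let H be an exponential random variable with rate 1, and let I be a nonnegative real random variable independent of H. Let P > 0, r₀ > 0, η > 0, N₀ > 0 and T ≥ 0 be real. Then ℙ[ P·H·r₀^{−η} / (I + N₀) < T ] = 1 − e^{−T N₀ r₀^η / P} · E[ e^{−(T r₀^η / P) I} ]. -/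
open MeasureTheory ProbabilityTheory Real

/-! After clearing the positive denominators, the outage event reads `H < c (I + N₀)` with
`c = T r₀ ^ η / P`. By independence the law of `(H, I)` is a product measure, so conditioning on
`I` (Fubini) replaces the event by the exponential distribution function
`1 - exp (-c (I + N₀))`, whose expectation is the claimed expression. -/

/-- The distribution function of the unit-rate exponential law, in strict form; it agrees with
the cdf because the law has no atoms. -/
lemma expMeasure_one_Iio {x : ℝ} (hx : 0 ≤ x) :
    expMeasure 1 (Set.Iio x) = ENNReal.ofReal (1 - Real.exp (-x)) := by
  have := isProbabilityMeasure_expMeasure (r := 1) one_pos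
  have : NullSingletonClass (expMeasure 1) := by
    unfold expMeasure gammaMeasure
    infer_instance
  rw [measure_congr Iio_ae_eq_Iic, ← ofReal_cdf, cdf_expMeasure_eq one_pos, if_pos hx, one_mul]

/-- Rayleigh-fading SINR outage probability expressed through the Laplace transform of
the interference power: if `H` is a unit-rate exponential random variable independent
of the nonnegative interference power `I`, then for `P, r₀, η, N₀ > 0` and `T ≥ 0`,
`ℙ[P H r₀^{−η} / (I + N₀) < T] = 1 − e^{−T N₀ r₀^η / P} E[e^{−(T r₀^η / P) I}]`. -/
theorem stmt7 {Ω : Type*} [MeasurableSpace Ω] (μ : Measure Ω) [IsProbabilityMeasure μ]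
    (H I : Ω → ℝ) (hH : Measurable H) (hI : Measurable I)
    (hHexp : μ.map H = expMeasure 1)
    (hIpos : ∀ ω, 0 ≤ I ω)
    (hindep : IndepFun H I μ)
    (P r₀ η N₀ T : ℝ) (hP : 0 < P) (hr₀ : 0 < r₀) (hη : 0 < η) (hN₀ : 0 < N₀)
    (hT : 0 ≤ T) :
    (μ {ω | P * H ω * r₀ ^ (-η) / (I ω + N₀) < T}).toReal =
      1 - Real.exp (-(T * N₀ * r₀ ^ η / P)) *
        ∫ ω, Real.exp (-(T * r₀ ^ η / P) * I ω) ∂μ := by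
  set c : ℝ := T * r₀ ^ η / P with hc
  have hr : 0 < r₀ ^ η := Real.rpow_pos_of_pos hr₀ η
  have hc0 : 0 ≤ c := by positivity
  have hset : {ω | P * H ω * r₀ ^ (-η) / (I ω + N₀) < T} =
      (fun ω => (H ω, I ω)) ⁻¹' {p : ℝ × ℝ | p.1 < c * (p.2 + N₀)} := by
    ext ω
    have h1 : 0 < I ω + N₀ := by linarith [hIpos ω]
    simp only [Set.mem_ofPred_eq, Set.mem_preimage]
    rw [div_lt_iff₀ h1, Real.rpow_neg hr₀.le, ← div_eq_mul_inv, div_lt_iff₀ hr, hc,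
      div_mul_eq_mul_div, lt_div_iff₀ hP]
    constructor <;> intro h <;> linarith
  have hmeas : MeasurableSet {p : ℝ × ℝ | p.1 < c * (p.2 + N₀)} :=
    measurableSet_lt (by fun_prop) (by fun_prop)
  have hprod := (indepFun_iff_map_prod_eq_prod_map_map hH.aemeasurable hI.aemeasurable).1 hindep
  have := Measure.isProbabilityMeasure_map (μ := μ) hH.aemeasurable
  have := Measure.isProbabilityMeasure_map (μ := μ) hI.aemeasurable
  have hle : ∀ ω, 0 ≤ c * (I ω + N₀) := fun ω => mul_nonneg hc0 (by linarith [hIpos ω])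
  have hprob : μ {ω | P * H ω * r₀ ^ (-η) / (I ω + N₀) < T} =
      ∫⁻ ω, ENNReal.ofReal (1 - Real.exp (-(c * (I ω + N₀)))) ∂μ := by
    rw [hset, ← Measure.map_apply (hH.prodMk hI) hmeas, hprod, Measure.prod_apply_symm hmeas,
      lintegral_map (measurable_measure_prodMk_right hmeas) hI]
    refine lintegral_congr fun ω => ?_
    rw [hHexp, ← expMeasure_one_Iio (hle ω)]
    rfl
  have hint : Integrable (fun ω => Real.exp (-c * I ω)) μ := by
    refine Integrable.of_bound (C := 1) (by fun_prop) (ae_of_all _ fun ω => ?_)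
    rw [Real.norm_eq_abs, abs_of_pos (Real.exp_pos _), Real.exp_le_one_iff]
    nlinarith [mul_nonneg hc0 (hIpos ω)]
  have hsplit : ∀ ω, Real.exp (-(c * (I ω + N₀))) =
      Real.exp (-(T * N₀ * r₀ ^ η / P)) * Real.exp (-c * I ω) := by
    intro ω
    rw [← Real.exp_add]
    congr 1
    rw [hc]
    ring
  rw [hprob, ← integral_eq_lintegral_of_nonneg_ae
    (ae_of_all _ fun ω => by simpa using hle ω) (by fun_prop)]
  simp_rw [hsplit]
  rw [integral_sub (integrable_const _) (hint.const_mul _), integral_const_mul]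
  simp
end

section
/- Let U ≥ 1 be an integer and let H be a Gamma-distributed random variable with shape U and rate 1. Let I be a nonnegative real random variable with ℙ(I > 0) = 1, independent of H, and let P > 0, r₀ > 0, η > 0, T > 0 be real. Let L(z) = E[e^{−z I}] for z > 0 (L is infinitely differentiable on (0, ∞)). Then ℙ[ P·H·r₀^{−η} / I < T ] = 1 − ∑_{u=0}^{U−1} ((−1)^u / u!) (T r₀^η / P)^u L^{(u)}(T r₀^η / P), where L^{(u)} denotes the u-th derivative of L. -/
open MeasureTheory ProbabilityTheory Real

/-!
Put `s = T r₀^η / P`. Almost surely the event `P H r₀^{-η} / I < T` is `H < s I`. Conditioning on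
`I` (independence and Fubini) turns its probability into the expectation of the Gamma(`U`, 1) CDF
at `s I`. For an integer shape this CDF is the Erlang formula `1 - ∑_{u<U} x^u / u! * e^{-x}`
(`gammaMeasure_real_Iio`, obtained from the fundamental theorem of calculus, since the derivative
of the partial sum telescopes). Taking expectations termwise leaves the moments
`E[I^u e^{-sI}] = (-1)^u L^{(u)}(s)` (`iteratedDeriv_laplace`), which come from the derivatives of
the moment generating function of `I` at `-s`, an interior point of its domain because `I ≥ 0`.
-/

/-- The derivative of the Erlang tail telescopes to minus the Gamma(`n + 1`, 1) density. -/
lemma hasDerivAt_erlang_tail (n : ℕ) (x : ℝ) :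
    HasDerivAt (fun t : ℝ ↦ ∑ u ∈ Finset.range (n + 1), t ^ u / Nat.factorial u * exp (-t))
      (-(x ^ n / Nat.factorial n * exp (-x))) x := by
  have hexp : HasDerivAt (fun t : ℝ ↦ exp (-t)) (-exp (-x)) x := by
    simpa using (hasDerivAt_neg x).exp
  induction n with
  | zero => simpa using hexp
  | succ n ih =>
    simp_rw [Finset.sum_range_succ _ (n + 1)]
    refine (ih.add (((hasDerivAt_pow (n + 1) x).div_const _).mul hexp)).congr_deriv ?_
    rw [Nat.factorial_succ]
    push_cast
    have : (Nat.factorial n : ℝ) ≠ 0 := by positivity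
    have : (n : ℝ) + 1 ≠ 0 := by positivity
    field_simp
    simp

/-- The Erlang formula: the CDF of the Gamma distribution with integer shape. -/
lemma gammaMeasure_real_Iio (U : ℕ) (hU : 1 ≤ U) {x : ℝ} (hx : 0 ≤ x) :
    (gammaMeasure U 1).real (Set.Iio x) =
      1 - ∑ u ∈ Finset.range U, x ^ u / Nat.factorial u * exp (-x) := by
  obtain ⟨n, rfl⟩ : ∃ n, U = n + 1 := ⟨U - 1, by omega⟩
  have ha : (0 : ℝ) < ((n + 1 : ℕ) : ℝ) := by positivity
  have hprob := isProbabilityMeasure_gammaMeasure ha one_pos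
  have hatom : (gammaMeasure ((n + 1 : ℕ) : ℝ) 1).real (Set.Iio x) =
      (gammaMeasure ((n + 1 : ℕ) : ℝ) 1).real (Set.Iic x) :=
    measureReal_congr ((withDensity_absolutelyContinuous _ _).ae_le Iio_ae_eq_Iic)
  rw [hatom, ← cdf_eq_real, cdf_gammaMeasure_eq_integral ha one_pos]
  have hsplit : ∫ t in Set.Iic x, gammaPDFReal ((n + 1 : ℕ) : ℝ) 1 t =
      ∫ t in Set.Icc 0 x, gammaPDFReal ((n + 1 : ℕ) : ℝ) 1 t := by
    refine setIntegral_eq_of_subset_of_forall_sdiff_eq_zero measurableSet_Iic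
      (fun t ht ↦ ht.2) (fun t ht ↦ ?_)
    have : ¬ 0 ≤ t := fun h ↦ ht.2 ⟨h, ht.1⟩
    simp [gammaPDFReal, this]
  have hpdf : ∫ t in Set.Icc 0 x, gammaPDFReal ((n + 1 : ℕ) : ℝ) 1 t =
      ∫ t in Set.Icc 0 x, t ^ n / Nat.factorial n * exp (-t) := by
    refine setIntegral_congr_fun measurableSet_Icc (fun t ht ↦ ?_)
    simp only [gammaPDFReal, if_pos ht.1]
    push_cast
    rw [Real.Gamma_nat_eq_factorial, add_sub_cancel_right, Real.rpow_natCast, Real.one_rpow]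
    ring_nf
  rw [hsplit, hpdf, integral_Icc_eq_integral_Ioc, ← intervalIntegral.integral_of_le hx,
    intervalIntegral.integral_eq_sub_of_hasDerivAt
      (f := fun t ↦ -∑ u ∈ Finset.range (n + 1), t ^ u / Nat.factorial u * exp (-t))
      (fun t _ ↦ (hasDerivAt_erlang_tail n t).neg.congr_deriv (neg_neg _))
      (Continuous.intervalIntegrable (by fun_prop) _ _)]
  simp only [Finset.sum_range_succ' _ n]
  simp
  ring

section Laplace

variable {Ω : Type*} [MeasurableSpace Ω] {μ : Measure Ω} [IsProbabilityMeasure μ] {I : Ω → ℝ}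

lemma neg_mem_interior_integrableExpSet (hI : Measurable I) (hI0 : ∀ ω, 0 ≤ I ω)
    {s : ℝ} (hs : 0 < s) : -s ∈ interior (integrableExpSet I μ) := by
  refine mem_interior.2 ⟨Set.Iio 0, fun t ht ↦ ?_, isOpen_Iio, by simpa using hs⟩
  have ht' : t < 0 := ht
  refine Integrable.of_bound (by fun_prop) 1 (ae_of_all _ fun ω ↦ ?_)
  rw [Real.norm_of_nonneg (exp_nonneg _), exp_le_one_iff]
  exact mul_nonpos_of_nonpos_of_nonneg ht'.le (hI0 ω)

lemma iteratedDeriv_laplace (hI : Measurable I) (hI0 : ∀ ω, 0 ≤ I ω) {L : ℝ → ℝ}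
    (hL : ∀ z : ℝ, 0 < z → L z = ∫ ω, exp (-z * I ω) ∂μ) {s : ℝ} (hs : 0 < s) (u : ℕ) :
    iteratedDeriv u L s = (-1) ^ u * ∫ ω, I ω ^ u * exp (-s * I ω) ∂μ := by
  have hEq : L =ᶠ[nhds s] fun z ↦ mgf I μ (-z) := by
    filter_upwards [Ioi_mem_nhds hs] with z hz
    exact hL z hz
  rw [hEq.iteratedDeriv_eq, iteratedDeriv_comp_neg,
    iteratedDeriv_mgf (neg_mem_interior_integrableExpSet hI hI0 hs), smul_eq_mul]

end Laplace

/-- Nakagami-m (integer gamma shape `U`) SINR distribution through derivatives of the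
Laplace transform of the interference power: if `H ~ Gamma(U, 1)` is independent of the
a.s. positive interference power `I`, and `L z = E[e^{−z I}]`, then
`ℙ[P H r₀^{−η} / I < T] = 1 − ∑_{u=0}^{U−1} ((−1)^u / u!) (T r₀^η / P)^u L^{(u)}(T r₀^η / P)`. -/
theorem stmt8 {Ω : Type*} [MeasurableSpace Ω] (μ : Measure Ω) [IsProbabilityMeasure μ]
    (U : ℕ) (hU : 1 ≤ U)
    (H I : Ω → ℝ) (hH : Measurable H) (hI : Measurable I)
    (hHgamma : μ.map H = gammaMeasure U 1)
    (hIpos : ∀ᵐ ω ∂μ, 0 < I ω) (hInonneg : ∀ ω, 0 ≤ I ω)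
    (hindep : IndepFun H I μ)
    (P r₀ η T : ℝ) (hP : 0 < P) (hr₀ : 0 < r₀) (hη : 0 < η) (hT : 0 < T)
    (L : ℝ → ℝ) (hL : ∀ z : ℝ, 0 < z → L z = ∫ ω, Real.exp (-z * I ω) ∂μ)
    (hLsmooth : ContDiffOn ℝ (⊤ : ℕ∞) L (Set.Ioi 0)) :
    (μ {ω | P * H ω * r₀ ^ (-η) / I ω < T}).toReal =
      1 - ∑ u ∈ Finset.range U,
        ((-1 : ℝ) ^ u / Nat.factorial u) * (T * r₀ ^ η / P) ^ u *
          iteratedDeriv u L (T * r₀ ^ η / P) := by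
  set s : ℝ := T * r₀ ^ η / P with hs_def
  have hs : 0 < s := by positivity
  have hevent : μ {ω | P * H ω * r₀ ^ (-η) / I ω < T} = μ {ω | H ω < s * I ω} := by
    refine measure_congr ?_
    filter_upwards [hIpos] with ω hω
    refine propext ?_
    change P * H ω * r₀ ^ (-η) / I ω < T ↔ H ω < s * I ω
    have hr : 0 < r₀ ^ η := by positivity
    rw [Real.rpow_neg hr₀.le, div_lt_iff₀ hω, ← div_eq_mul_inv, div_lt_iff₀ hr, hs_def,
      div_mul_eq_mul_div, lt_div_iff₀ hP]
    ring_nf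
  have hprobH : IsProbabilityMeasure (gammaMeasure U 1) :=
    isProbabilityMeasure_gammaMeasure (by exact_mod_cast hU) one_pos
  have hmeas : MeasurableSet {p : ℝ × ℝ | p.1 < s * p.2} :=
    measurableSet_lt measurable_fst (measurable_snd.const_mul s)
  have hcond : μ {ω | H ω < s * I ω} =
      ∫⁻ ω, gammaMeasure U 1 (Set.Iio (s * I ω)) ∂μ := by
    have hprod := (indepFun_iff_map_prod_eq_prod_map_map hH.aemeasurable hI.aemeasurable).1 hindep
    have hpre : {ω | H ω < s * I ω} =
        (fun ω ↦ (H ω, I ω)) ⁻¹' {p : ℝ × ℝ | p.1 < s * p.2} := rfl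
    have : IsProbabilityMeasure (μ.map I) := Measure.isProbabilityMeasure_map hI.aemeasurable
    rw [hpre, ← Measure.map_apply (hH.prodMk hI) hmeas, hprod, hHgamma,
      Measure.prod_apply_symm hmeas, lintegral_map (measurable_measure_prodMk_right hmeas) hI]
    rfl
  have hmeasF : Measurable fun ω ↦ gammaMeasure U 1 (Set.Iio (s * I ω)) :=
    (measurable_measure_prodMk_right (μ := gammaMeasure U 1) hmeas).comp hI
  have hint (u : ℕ) : Integrable (fun ω ↦ I ω ^ u * exp (-s * I ω)) μ :=
    integrable_pow_mul_exp_of_mem_interior_integrableExpSet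
      (neg_mem_interior_integrableExpSet hI hInonneg hs) u
  have hterm (u : ℕ) (ω : Ω) : (s * I ω) ^ u / Nat.factorial u * exp (-(s * I ω)) =
      s ^ u / Nat.factorial u * (I ω ^ u * exp (-s * I ω)) := by
    rw [mul_pow, neg_mul]
    ring
  rw [hevent, hcond, ← integral_toReal hmeasF.aemeasurable
    (ae_of_all _ fun ω ↦ measure_lt_top _ _)]
  have herlang (ω : Ω) : (gammaMeasure U 1 (Set.Iio (s * I ω))).toReal =
      1 - ∑ u ∈ Finset.range U, s ^ u / Nat.factorial u * (I ω ^ u * exp (-s * I ω)) := by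
    simp_rw [← hterm]
    exact gammaMeasure_real_Iio U hU (mul_nonneg hs.le (hInonneg ω))
  simp_rw [herlang]
  rw [integral_sub (integrable_const _)
      (integrable_finsetSum _ fun u _ ↦ (hint u).const_mul _),
    integral_finsetSum _ fun u _ ↦ (hint u).const_mul _]
  simp_rw [integral_const_mul, iteratedDeriv_laplace hI hInonneg hL hs]
  congr 1
  · simp
  · refine Finset.sum_congr rfl fun u _ ↦ ?_
    -- The sign of the derivative cancels the sign in the sum.
    have hsign : ((-1 : ℝ) ^ u) * (-1) ^ u = 1 := by rw [← mul_pow]; simp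
    linear_combination (-(s ^ u / Nat.factorial u *
      ∫ ω, I ω ^ u * exp (-s * I ω) ∂μ)) * hsign
end

section
/- Let λ > 0, P > 0, r₀ > 0, N₀ > 0 and T ≥ 0 be real. Let H be an exponential random variable with rate 1 and I a nonnegative real random variable independent of H whose Laplace transform satisfies E[e^{−z I}] = exp{ −πλ √(zP) · arctan( √(zP) / r₀² ) } for all z > 0. Then ℙ[ P·H·r₀^{−4} / (I + N₀) < T ] = 1 − exp{ −T N₀ r₀⁴ / P − πλ √T r₀² arctan(√T) }. -/
open MeasureTheory ProbabilityTheory Real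

/-- Conditioning on `I`: the probability that a unit-rate exponential `H` falls below
`z (I + N)` is expressed through the Laplace transform of `I` at `z`. -/
lemma outage_eq_laplace {Ω : Type*} [MeasurableSpace Ω] (μ : Measure Ω) [IsProbabilityMeasure μ]
    {z N : ℝ} (hz : 0 ≤ z) (hN : 0 ≤ N) {H I : Ω → ℝ} (hH : Measurable H) (hI : Measurable I)
    (hHexp : μ.map H = expMeasure 1) (hInonneg : ∀ ω, 0 ≤ I ω) (hindep : IndepFun H I μ) :
    (μ {ω | H ω < z * (I ω + N)}).toReal =
      1 - Real.exp (-(z * N)) * ∫ ω, Real.exp (-z * I ω) ∂μ := by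
  have hpos : ∀ ω, 0 ≤ z * (I ω + N) := fun ω => mul_nonneg hz (add_nonneg (hInonneg ω) hN)
  have := isProbabilityMeasure_expMeasure (r := 1) one_pos
  have := Measure.isProbabilityMeasure_map (μ := μ) hI.aemeasurable
  have hS : MeasurableSet {p : ℝ × ℝ | p.1 < z * (p.2 + N)} :=
    measurableSet_lt (by fun_prop) (by fun_prop)
  have hmap := hindep.map_prod_eq_prod_map_map hH.aemeasurable hI.aemeasurable
  have h1 : μ {ω | H ω < z * (I ω + N)} =
      ∫⁻ ω, ENNReal.ofReal (1 - Real.exp (-(z * (I ω + N)))) ∂μ := by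
    calc μ {ω | H ω < z * (I ω + N)}
        = (μ.map fun ω => (H ω, I ω)) {p : ℝ × ℝ | p.1 < z * (p.2 + N)} := by
          rw [Measure.map_apply (hH.prodMk hI) hS]; rfl
      _ = ∫⁻ y, expMeasure 1 ((fun x => (x, y)) ⁻¹' {p : ℝ × ℝ | p.1 < z * (p.2 + N)})
            ∂(μ.map I) := by
          rw [hmap, hHexp, Measure.prod_apply_symm hS]
      _ = ∫⁻ ω, expMeasure 1 (Set.Iio (z * (I ω + N))) ∂μ := by
          rw [lintegral_map (measurable_measure_prodMk_right hS) hI]; rfl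
      _ = _ := lintegral_congr fun ω => expMeasure_one_Iio (hpos ω)
  have hint : Integrable (fun ω => Real.exp (-(z * (I ω + N)))) μ := by
    refine Integrable.of_bound (by fun_prop) 1 (.of_forall fun ω => ?_)
    rw [Real.norm_eq_abs, Real.abs_exp, Real.exp_le_one_iff]
    linarith [hpos ω]
  rw [h1, ← integral_eq_lintegral_of_nonneg_ae
    (.of_forall fun ω => by
      have : Real.exp (-(z * (I ω + N))) ≤ 1 := Real.exp_le_one_iff.2 (by linarith [hpos ω])
      simpa using this) (by fun_prop),
    integral_sub (integrable_const _) hint, ← integral_const_mul]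
  congr 1
  · simp
  · refine integral_congr_ae (.of_forall fun ω => ?_)
    simp only [← Real.exp_add]
    congr 1
    ring

/-- Outage probability in a Poisson cellular network with `η = 4`: with `H` unit-rate
exponential, `I ≥ 0` independent of `H` with Laplace transform
`E[e^{−zI}] = exp{−πλ√(zP) arctan(√(zP)/r₀²)}`,
`ℙ[P H r₀^{−4}/(I + N₀) < T] = 1 − exp{−T N₀ r₀⁴/P − πλ√T r₀² arctan(√T)}`. -/
theorem stmt13 {Ω : Type*} [MeasurableSpace Ω] (μ : Measure Ω) [IsProbabilityMeasure μ]
    (lam P r₀ N₀ T : ℝ) (hlam : 0 < lam) (hP : 0 < P) (hr₀ : 0 < r₀) (hN₀ : 0 < N₀)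
    (hT : 0 ≤ T)
    (H I : Ω → ℝ) (hH : Measurable H) (hI : Measurable I)
    (hHexp : μ.map H = expMeasure 1)
    (hInonneg : ∀ ω, 0 ≤ I ω)
    (hindep : IndepFun H I μ)
    (hLT : ∀ z : ℝ, 0 < z → ∫ ω, Real.exp (-z * I ω) ∂μ =
      Real.exp (-(π * lam * Real.sqrt (z * P) * Real.arctan (Real.sqrt (z * P) / r₀ ^ 2)))) :
    (μ {ω | P * H ω * r₀ ^ (-4 : ℤ) / (I ω + N₀) < T}).toReal =
      1 - Real.exp (-(T * N₀ * r₀ ^ 4 / P) -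
        π * lam * Real.sqrt T * r₀ ^ 2 * Real.arctan (Real.sqrt T)) := by
  have hz : 0 ≤ T * r₀ ^ 4 / P := by positivity
  have hset : {ω | P * H ω * r₀ ^ (-4 : ℤ) / (I ω + N₀) < T} =
      {ω | H ω < T * r₀ ^ 4 / P * (I ω + N₀)} := by
    ext ω
    have hd : 0 < I ω + N₀ := add_pos_of_nonneg_of_pos (hInonneg ω) hN₀
    have hr : r₀ ^ (-4 : ℤ) = (r₀ ^ 4)⁻¹ := by
      rw [zpow_neg]; norm_cast
    have h4 : 0 < r₀ ^ 4 := by positivity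
    rw [Set.mem_ofPred_eq, Set.mem_ofPred_eq, hr, ← div_eq_mul_inv, div_lt_iff₀ hd,
      div_lt_iff₀ h4, div_mul_eq_mul_div, lt_div_iff₀ hP]
    constructor <;> intro h <;> nlinarith
  have hsqrt : Real.sqrt (T * r₀ ^ 4 / P * P) = Real.sqrt T * r₀ ^ 2 := by
    rw [div_mul_cancel₀ _ hP.ne', Real.sqrt_mul hT,
      show r₀ ^ 4 = (r₀ ^ 2) ^ 2 by ring, Real.sqrt_sq (by positivity)]
  have hL : ∫ ω, Real.exp (-(T * r₀ ^ 4 / P) * I ω) ∂μ =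
      Real.exp (-(π * lam * (Real.sqrt T * r₀ ^ 2) * Real.arctan (Real.sqrt T))) := by
    rcases hT.eq_or_lt with rfl | hT'
    · simp
    · rw [hLT _ (by positivity), hsqrt, mul_div_cancel_right₀ _ (by positivity)]
  rw [hset, outage_eq_laplace μ hz hN₀.le hH hI hHexp hInonneg hindep, hL, ← Real.exp_add]
  congr 2
  ring
end

section
/- Let λ > 0, P > 0, r₀ > 0 and N₀ > 0 be real. Let H be an exponential random variable with rate 1 and I a nonnegative real random variable independent of H whose Laplace transform satisfies E[e^{−z I}] = exp{ −πλ √(zP) · arctan( √(zP) / r₀² ) } for all z > 0. Then E[ log( 1 + P·H·r₀^{−4} / (I + N₀) ) ] = ∫_0^∞ (1/(t + 1)) · exp{ −t N₀ r₀⁴ / P − πλ √t r₀² arctan(√t) } dt. -/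
/-!
The rate is the layer-cake integral of the SINR tail. Since `log (1 + x) = ∫₀ˣ dt / (t + 1)`, Tonelli
gives `E[log (1 + Υ)] = ∫₀^∞ P(Υ > t) / (t + 1) dt` for the SINR `Υ ≥ 0`. With `c = t r₀⁴ / P`, the
event `Υ > t` is `H > c (I + N₀)`. Conditioning on `I` and using the exponential tail
`P(H > x) = e^{-x}`, its probability is `e^{-c N₀} E[e^{-c I}]` (`meas_lt_exp`), and the Laplace
transform of `I` at `z = c`, where `√(zP) = √t r₀²`, yields the integrand.

Everything is done with `ℝ≥0∞`-valued integrals of nonnegative functions, so that no integrability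
of the rate has to be established.
-/

open MeasureTheory ProbabilityTheory Real

lemma expMeasure_one_Ioi {x : ℝ} (hx : 0 ≤ x) :
    expMeasure 1 (Set.Ioi x) = ENNReal.ofReal (Real.exp (-x)) := by
  have := isProbabilityMeasure_expMeasure (r := 1) one_pos
  have h1 : expMeasure 1 (Set.Iic x) = ENNReal.ofReal (1 - Real.exp (-x)) := by
    rw [← ofReal_cdf, cdf_expMeasure_eq one_pos, if_pos hx, one_mul]
  rw [← Set.compl_Iic, prob_compl_eq_one_sub measurableSet_Iic, h1, ← ENNReal.ofReal_one,
    ← ENNReal.ofReal_sub _ (by simpa using hx)]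
  congr 1
  ring

/-- The tail of a unit-rate exponential `H` beyond an independent random threshold `c (I + N)`. -/
lemma meas_lt_exp {Ω : Type*} [MeasurableSpace Ω] (μ : Measure Ω) [IsProbabilityMeasure μ]
    (H I : Ω → ℝ) (hH : Measurable H) (hI : Measurable I)
    (hHexp : μ.map H = expMeasure 1) (hInonneg : ∀ ω, 0 ≤ I ω) (hindep : IndepFun H I μ)
    {c N : ℝ} (hc : 0 ≤ c) (hN : 0 ≤ N) :
    μ {ω | c * (I ω + N) < H ω} =
      ENNReal.ofReal (Real.exp (-(c * N)) * ∫ ω, Real.exp (-c * I ω) ∂μ) := by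
  have hmap := (indepFun_iff_map_prod_eq_prod_map_map hH.aemeasurable hI.aemeasurable).1 hindep
  have : IsProbabilityMeasure (expMeasure 1) := isProbabilityMeasure_expMeasure one_pos
  have hS : MeasurableSet {p : ℝ × ℝ | c * (p.2 + N) < p.1} :=
    measurableSet_lt (by fun_prop) (by fun_prop)
  have hint : Integrable (fun ω => Real.exp (-(c * N)) * Real.exp (-c * I ω)) μ := by
    refine Integrable.const_mul ?_ _
    refine Integrable.of_bound (by fun_prop) 1 (Filter.Eventually.of_forall fun ω => ?_)
    rw [Real.norm_eq_abs, abs_of_pos (Real.exp_pos _), Real.exp_le_one_iff]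
    nlinarith [mul_nonneg hc (hInonneg ω)]
  calc μ {ω | c * (I ω + N) < H ω}
      = μ.map (fun ω => (H ω, I ω)) {p : ℝ × ℝ | c * (p.2 + N) < p.1} := by
        rw [Measure.map_apply (by fun_prop) hS]; rfl
    _ = ∫⁻ y, expMeasure 1 ((fun x => (x, y)) ⁻¹' {p : ℝ × ℝ | c * (p.2 + N) < p.1})
          ∂(μ.map I) := by
        rw [hmap, hHexp, Measure.prod_apply_symm hS]
    _ = ∫⁻ ω, expMeasure 1 (Set.Ioi (c * (I ω + N))) ∂μ := by
        rw [lintegral_map (measurable_measure_prodMk_right hS) hI]; rfl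
    _ = ∫⁻ ω, ENNReal.ofReal (Real.exp (-(c * N)) * Real.exp (-c * I ω)) ∂μ := by
        refine lintegral_congr fun ω => ?_
        rw [expMeasure_one_Ioi (mul_nonneg hc (add_nonneg (hInonneg ω) hN)), ← Real.exp_add]
        congr 2
        ring
    _ = _ := by
        rw [← ofReal_integral_eq_lintegral_ofReal hint
          (Filter.Eventually.of_forall fun ω => by positivity), integral_const_mul]

lemma intervalIntegral_one_div_add_one {x : ℝ} (hx : 0 ≤ x) :
    ∫ t in (0:ℝ)..x, 1 / (t + 1) = Real.log (1 + x) := by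
  rw [intervalIntegral.integral_comp_add_right (fun t => 1 / t),
    integral_one_div_of_pos (by norm_num) (by linarith)]
  congr 1
  ring

/-- Ergodic rate in a Poisson cellular network with `η = 4`: with `H` unit-rate
exponential, `I ≥ 0` independent of `H` with Laplace transform
`E[e^{−zI}] = exp{−πλ√(zP) arctan(√(zP)/r₀²)}`,
`E[log(1 + P H r₀^{−4}/(I + N₀))]
  = ∫_0^∞ (1/(t+1)) exp{−t N₀ r₀⁴/P − πλ√t r₀² arctan(√t)} dt`. -/
theorem stmt14 {Ω : Type*} [MeasurableSpace Ω] (μ : Measure Ω) [IsProbabilityMeasure μ]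
    (lam P r₀ N₀ : ℝ) (hlam : 0 < lam) (hP : 0 < P) (hr₀ : 0 < r₀) (hN₀ : 0 < N₀)
    (H I : Ω → ℝ) (hH : Measurable H) (hI : Measurable I)
    (hHexp : μ.map H = expMeasure 1)
    (hInonneg : ∀ ω, 0 ≤ I ω)
    (hindep : IndepFun H I μ)
    (hLT : ∀ z : ℝ, 0 < z → ∫ ω, Real.exp (-z * I ω) ∂μ =
      Real.exp (-(π * lam * Real.sqrt (z * P) * Real.arctan (Real.sqrt (z * P) / r₀ ^ 2)))) :
    ∫ ω, Real.log (1 + P * H ω * r₀ ^ (-4 : ℤ) / (I ω + N₀)) ∂μ =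
      ∫ t in Set.Ioi (0:ℝ), (1 / (t + 1)) *
        Real.exp (-(t * N₀ * r₀ ^ 4 / P) -
          π * lam * Real.sqrt t * r₀ ^ 2 * Real.arctan (Real.sqrt t)) := by
  have hHpos : ∀ᵐ ω ∂μ, 0 < H ω := by
    have h := expMeasure_one_Ioi le_rfl
    rw [neg_zero, Real.exp_zero, ENNReal.ofReal_one, ← hHexp,
      Measure.map_apply hH measurableSet_Ioi] at h
    exact (prob_compl_eq_zero_iff (hH measurableSet_Ioi)).2 h
  set X : Ω → ℝ := fun ω => P * H ω * r₀ ^ (-4 : ℤ) / (I ω + N₀) with hX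
  have hXm : Measurable X := by fun_prop
  have hXnn : 0 ≤ᵐ[μ] X := by
    filter_upwards [hHpos] with ω hω
    have := hInonneg ω
    simp only [hX, Pi.zero_apply]
    positivity
  have hlog : ∀ᵐ ω ∂μ, Real.log (1 + X ω) = ∫ t in (0:ℝ)..X ω, 1 / (t + 1) := by
    filter_upwards [hXnn] with ω hω
    exact (intervalIntegral_one_div_add_one hω).symm
  change ∫ ω, Real.log (1 + X ω) ∂μ = _
  rw [integral_eq_lintegral_of_nonneg_ae, integral_eq_lintegral_of_nonneg_ae]
  rotate_left
  · refine (ae_restrict_iff' measurableSet_Ioi).2 (Filter.Eventually.of_forall fun t ht => ?_)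
    have : (0:ℝ) < t := ht
    simp only [Pi.zero_apply]
    positivity
  · exact Measurable.aestronglyMeasurable (by fun_prop)
  · filter_upwards [hXnn] with ω hω
    exact Real.log_nonneg (by simpa using hω)
  · exact Measurable.aestronglyMeasurable (by fun_prop)
  congr 1
  rw [lintegral_congr_ae (hlog.mono fun ω h => congrArg ENNReal.ofReal h),
    lintegral_comp_eq_lintegral_meas_lt_mul μ hXnn hXm.aemeasurable]
  rotate_left
  · intro t ht
    refine ContinuousOn.intervalIntegrable fun s hs => ContinuousAt.continuousWithinAt ?_
    rw [Set.uIcc_of_le ht.le] at hs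
    have : s + 1 ≠ 0 := by linarith [hs.1]
    fun_prop (disch := assumption)
  · refine (ae_restrict_iff' measurableSet_Ioi).2 (Filter.Eventually.of_forall fun t ht => ?_)
    have : (0:ℝ) < t := ht
    positivity
  refine setLIntegral_congr_fun measurableSet_Ioi fun t (ht : 0 < t) => ?_
  have hc : 0 < t * r₀ ^ 4 / P := by positivity
  have hset : {ω | t < X ω} = {ω | t * r₀ ^ 4 / P * (I ω + N₀) < H ω} := by
    ext ω
    have hD : 0 < I ω + N₀ := by linarith [hInonneg ω]
    simp only [Set.mem_ofPred_eq, hX]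
    rw [lt_div_iff₀ hD, zpow_neg, ← div_eq_mul_inv, lt_div_iff₀ (by positivity),
      div_mul_eq_mul_div, div_lt_iff₀ hP]
    norm_cast
    ring_nf
  have hz : t * r₀ ^ 4 / P * P = t * (r₀ ^ 2) ^ 2 := by
    field_simp
  have hsqrt : Real.sqrt (t * r₀ ^ 4 / P * P) = Real.sqrt t * r₀ ^ 2 := by
    rw [hz, Real.sqrt_mul ht.le, Real.sqrt_sq (by positivity)]
  rw [hset, meas_lt_exp μ H I hH hI hHexp hInonneg hindep hc.le hN₀.le, hLT _ hc, hsqrt,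
    mul_div_cancel_right₀ _ (by positivity : r₀ ^ 2 ≠ 0), ← Real.exp_add,
    ← ENNReal.ofReal_mul (Real.exp_pos _).le, mul_comm]
  congr 3
  ring
end
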